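/- Let G be a G-metric on a nonempty set X, let X_1,…,X_m be nonempty subsets of X, and let T : ∪_{i=1}^m X_i → ∪_{i=1}^m X_i be a cyclical operator. Write D(x,y) = G(x,y,y) + G(y,x,x). Suppose T is a G-Mohseni-semi cyclical operator, i.e. there exists α ∈ (0,1/2) such that D(Tx,Ty) ≤ α·(D(x,y) + D(x,Tx)) for all x ∈ X_i and y ∈ X_{i+1} (indices mod m). Then for every ε > 0 and all x, y ∈ F_ε^G(T), one has D(x,y) ≤ ε(2+α)/(1−α). -/

import Mathlib

open Filter Set

/-- A G-metric on a set `X`. -/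
structure IsGMetric {X : Type*} (G : X → X → X → ℝ) : Prop where
  eq_iff : ∀ x y z, G x y z = 0 ↔ x = y ∧ y = z
  pos : ∀ x y, x ≠ y → 0 < G x x y
  mono : ∀ x y z, z ≠ y → G x x y ≤ G x y z
  symm_swap : ∀ x y z, G x y z = G x z y
  symm_cycle : ∀ x y z, G x y z = G y z x
  rect : ∀ x y z a, G x y z ≤ G x a a + G a y z

/-- `D(x,y) = G(x,y,y) + G(y,x,x)`. -/
def gD {X : Type*} (G : X → X → X → ℝ) (x y : X) : ℝ :=
  G x y y + G y x x

/-- `T` is a cyclical operator with respect to the family of sets `A`. -/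
def IsCyclical {X : Type*} {m : ℕ} [NeZero m] (A : Fin m → Set X) (T : X → X) : Prop :=
  ∀ i : Fin m, Set.MapsTo T (A i) (A (i + 1))

theorem gD_tri {X : Type*} {G : X → X → X → ℝ} (hG : IsGMetric G) (x a y : X) :
    gD G x y ≤ gD G x a + gD G a y := by
  have h1 := hG.rect x y y a
  have h2 := hG.rect y x x a
  unfold gD
  linarith

theorem gD_comm' {X : Type*} (G : X → X → X → ℝ) (x y : X) : gD G x y = gD G y x := by
  unfold gD
  ring

theorem gD_self' {X : Type*} {G : X → X → X → ℝ} (hG : IsGMetric G) (x : X) :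
    gD G x x = 0 := by
  have := (hG.eq_iff x x x).2 ⟨rfl, rfl⟩
  unfold gD
  linarith

open scoped Fin.CommRing in
theorem orbit_mem {X : Type*} {m : ℕ} [NeZero m] {A : Fin m → Set X} {T : X → X}
    (hT : IsCyclical A T) {a : X} (ha : a ∈ A 0) (n : ℕ) : T^[n] a ∈ A (n : Fin m) := by
  induction n with
  | zero => simpa using ha
  | succ n ih =>
    rw [Function.iterate_succ_apply', Nat.cast_succ]
    exact hT _ ih

open scoped Fin.CommRing in
theorem orbit_idx {m : ℕ} [NeZero m] (N : ℕ) (i : Fin m) :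
    ∃ k : ℕ, k ≤ m ∧ ((N + k : ℕ) : Fin m) + 1 = i := by
  refine ⟨(i - 1 - (N : Fin m)).val, (Fin.is_lt _).le, ?_⟩
  rw [Nat.cast_add, Fin.cast_val_eq_self]
  ring

/-- For a G-Mohseni-semi cyclical operator, any two `ε`-fixed points `x, y` satisfy
`D(x,y) ≤ ε(2+α)/(1−α)`. -/
theorem stmt_11 {X : Type*} [Nonempty X] {m : ℕ} [NeZero m]
    (G : X → X → X → ℝ) (hG : IsGMetric G)
    (A : Fin m → Set X) (hA : ∀ i, (A i).Nonempty)
    (T : X → X) (hT : IsCyclical A T)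
    (α : ℝ) (hα : α ∈ Set.Ioo (0 : ℝ) (1/2))
    (hcontr : ∀ i : Fin m, ∀ x ∈ A i, ∀ y ∈ A (i + 1),
      gD G (T x) (T y) ≤ α * (gD G x y + gD G x (T x))) :
    ∀ ε > 0, ∀ x ∈ {x ∈ ⋃ i, A i | gD G x (T x) < ε},
      ∀ y ∈ {x ∈ ⋃ i, A i | gD G x (T x) < ε},
      gD G x y ≤ ε * (2 + α) / (1 - α) := by
  obtain ⟨h0, h1⟩ := hα
  intro ε hε x hx y hy
  obtain ⟨a, ha⟩ := hA 0
  have hstep : ∀ n, gD G (T^[n] a) (T^[n+1] a) ≤ (2*α)^n * gD G a (T a) := by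
    intro n
    induction n with
    | zero => simp
    | succ n ih =>
      have hm := orbit_mem hT ha n
      have h := hcontr _ _ hm _ (hT _ hm)
      rw [← Function.iterate_succ_apply' T n a] at h
      rw [← Function.iterate_succ_apply' T (n+1) a] at h
      rw [pow_succ]
      have := mul_le_mul_of_nonneg_left ih h0.le
      linarith
  have hM : (0:ℝ) < 2 * m + 4 := by positivity
  obtain ⟨δ, hδ, hδ2⟩ : ∃ δ : ℝ, 0 < δ ∧ (2 * m + 4) * δ = α * ε :=
    ⟨α * ε / (2 * m + 4), by positivity, by field_simp⟩
  have hlim : Tendsto (fun n : ℕ => (2*α)^n * gD G a (T a)) atTop (nhds (0 * gD G a (T a))) :=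
    (tendsto_pow_atTop_nhds_zero_of_lt_one (by linarith) (by linarith)).mul_const _
  rw [zero_mul] at hlim
  obtain ⟨N, hN⟩ := eventually_atTop.1 (hlim.eventually (gt_mem_nhds hδ))
  have hs : ∀ n ≥ N, gD G (T^[n] a) (T^[n+1] a) ≤ δ := fun n hn =>
    (hstep n).trans (hN n hn).le
  have hk : ∀ k : ℕ, gD G (T^[N] a) (T^[N+k] a) ≤ k * δ := by
    intro k
    induction k with
    | zero => simp [gD_self' hG]
    | succ k ih =>
      have h3 := gD_tri hG (T^[N] a) (T^[N+k] a) (T^[N+(k+1)] a)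
      have h4 := hs (N+k) (by omega)
      rw [← add_assoc] at h3 ⊢
      push_cast
      linarith
  have key : ∀ z ∈ {x ∈ ⋃ i, A i | gD G x (T x) < ε},
      (1 - α) * gD G (T^[N] a) z ≤ ε + 2 * δ + m * δ := by
    rintro z ⟨hz, hzε⟩
    obtain ⟨i, hi⟩ := mem_iUnion.1 hz
    obtain ⟨k, hkm, hki⟩ := orbit_idx N i
    have hm := orbit_mem hT ha (N+k)
    have hc := hcontr _ _ hm z (by rw [hki]; exact hi)
    have hsk := hs (N+k) (by omega)
    rw [Function.iterate_succ_apply'] at hsk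
    have hkk := hk k
    have hkm' : (k:ℝ) * δ ≤ m * δ := by gcongr
    set u := T^[N+k] a
    have t1 := gD_tri hG u (T u) z
    have t2 := gD_tri hG (T u) (T z) z
    have t3 := gD_comm' G (T z) z
    have t4 := gD_tri hG (T^[N] a) u z
    have t5 : (1 - α) * gD G (T^[N] a) z ≤ (1 - α) * (m * δ + gD G u z) :=
      mul_le_mul_of_nonneg_left (by linarith) (by linarith)
    have t6 : α * gD G u (T u) ≤ α * δ := mul_le_mul_of_nonneg_left hsk h0.le
    have t7 : 0 ≤ α * (m * δ) := by positivity
    have t8 : α * δ ≤ 1 * δ := mul_le_mul_of_nonneg_right (by linarith) hδ.le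
    linarith
  have kx := key x hx
  have ky := key y hy
  rw [le_div_iff₀ (by linarith)]
  have t := gD_tri hG x (T^[N] a) y
  rw [gD_comm' G x (T^[N] a)] at t
  have t' := mul_le_mul_of_nonneg_left t (show 0 ≤ 1 - α by linarith)
  linarith
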